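/- Let phi be a positive non-increasing function on positive integers with phi(1) = 1 and phi(d) -> 0. For any badly approximable Theta in k((X^{-1})), there exists an uncountable set B of badly approximable Phi in k((X^{-1})) such that for every Phi in B, the series 1, Theta, Phi are linearly independent over k[X], and there exist polynomials q of arbitrarily large degree with |q|^2 * ||q Theta|| * ||q Phi|| <= 1/phi(|q|). -/

import Mathlib

/-
Let `a` be the sequence of partial quotients of `Θ`, of degree at most `M`. The partial quotients
`b` of `Φ` are cut into blocks `t_j, a_n, …, a_1`, where the separator `t_j` has degree `M + 1` or
`M + 2`. Continuants are symmetric under reversal, so if `Q` and `q` are the denominators of `b` at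
the separator and at the end of a block, then `q = Q · q_n(Θ) + Q' · q_{n-1}(Θ)`, where `Q'` is the
denominator preceding `Q`. Thus `q` is a good denominator for `Φ`, being one of its convergents, and
also for `Θ`, up to the factor `|Q|`: one gets `|q|² ‖qΘ‖ ‖qΦ‖ ≤ |Q|²`, which is negligible when the
block is long. The ratio `‖qΘ‖ / ‖qΦ‖`, of order at least `|Q|`, is unbounded, which rules out a
linear relation between `1`, `Θ` and `Φ`. The free choice of the separators makes the set of `Φ`
uncountable.
-/

open Polynomial Filter

noncomputable section
open scoped Classical

namespace Littlewood

variable (k : Type*) [Field k]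

/-- The element `X` of `k((X⁻¹))`: the inverse of the Laurent-series variable `t = X⁻¹`. -/
def XLS : LaurentSeries k := (HahnSeries.single (1 : ℤ) (1 : k))⁻¹

variable {k}

/-- Embedding of `k[X]` into `k((X⁻¹))`, sending the polynomial variable to `X`. -/
def emb (p : Polynomial k) : LaurentSeries k := Polynomial.aeval (XLS k) p

/-- The degree of a Laurent series in `X⁻¹`: if `F = ∑_{h ≥ -m} f_h X^{-h}` with
`f_{-m} ≠ 0` then `deg F = m`. -/
def deg (F : LaurentSeries k) : ℤ := -F.order

/-- The norm `|F| = 2 ^ deg F`, with `|0| = 0`. -/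
def lnorm (F : LaurentSeries k) : ℝ := if F = 0 then 0 else (2 : ℝ) ^ (deg F)

/-- Fractional part: the part of the series comprising only negative powers of `X`. -/
def frac (F : LaurentSeries k) : LaurentSeries k where
  coeff n := if 1 ≤ n then F.coeff n else 0
  isPWO_support' := F.isPWO_support'.mono (fun n hn => by
    simp only [Function.mem_support] at hn ⊢
    intro h
    exact hn (by simp [h]))

/-- `‖F‖`: the norm of the fractional part of `F`. -/
def fnorm (F : LaurentSeries k) : ℝ := lnorm (frac F)

/-- `F` is a rational function. -/
def IsRat (F : LaurentSeries k) : Prop :=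
  ∃ p q : Polynomial k, q ≠ 0 ∧ F * emb q = emb p

/-- The polynomial part of a Laurent series (the part with nonnegative powers of `X`). -/
def polyPart (F : LaurentSeries k) : Polynomial k :=
  ∑ i ∈ Finset.range ((-F.order).toNat + 1), Polynomial.C (F.coeff (-(i : ℤ))) * Polynomial.X ^ i

/-- The complete quotients of the continued fraction algorithm applied to `F`. -/
def cfRem (F : LaurentSeries k) : ℕ → LaurentSeries k
  | 0 => F
  | n + 1 => (cfRem F n - emb (polyPart (cfRem F n)))⁻¹

/-- The partial quotients of the continued fraction expansion of `F`. -/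
def pq (F : LaurentSeries k) (n : ℕ) : Polynomial k := polyPart (cfRem F n)

/-- Denominators `q_n` of the convergents of the continued fraction with
partial quotients `a`. -/
def den (a : ℕ → Polynomial k) : ℕ → Polynomial k
  | 0 => 1
  | 1 => a 1
  | n + 2 => a (n + 2) * den a (n + 1) + den a n

/-- Numerators `p_n` of the convergents. -/
def num (a : ℕ → Polynomial k) : ℕ → Polynomial k
  | 0 => a 0
  | 1 => a 1 * a 0 + 1
  | n + 2 => a (n + 2) * num a (n + 1) + num a n

/-- The value of a finite continued fraction `[b_0, b_1, …, b_m]` over `k[X]`. -/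
def finCF : List (Polynomial k) → LaurentSeries k
  | [] => 0
  | [b] => emb b
  | b :: l => emb b + (finCF l)⁻¹

/-- `F` is badly approximable. -/
def Bad (F : LaurentSeries k) : Prop :=
  ∃ c : ℝ, 0 < c ∧ ∀ q : Polynomial k, q ≠ 0 → c ≤ lnorm (emb q) * fnorm (emb q * F)

@[simp] lemma emb_zero : emb (0 : k[X]) = 0 := map_zero _

@[simp] lemma emb_one : emb (1 : k[X]) = 1 := map_one _

@[simp] lemma emb_add (p q : k[X]) : emb (p + q) = emb p + emb q := map_add _ p q

@[simp] lemma emb_mul (p q : k[X]) : emb (p * q) = emb p * emb q := map_mul _ p q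

@[simp] lemma emb_neg (p : k[X]) : emb (-p) = -emb p := map_neg _ p

@[simp] lemma emb_sub (p q : k[X]) : emb (p - q) = emb p - emb q := map_sub _ p q

lemma emb_monomial (i : ℕ) (c : k) : emb (monomial i c) = HahnSeries.single (-(i : ℤ)) c := by
  have hC : algebraMap k (LaurentSeries k) c = HahnSeries.C c := HahnSeries.ofPowerSeries_C c
  rw [emb, aeval_monomial, XLS, HahnSeries.inv_single, HahnSeries.single_pow, hC,
    HahnSeries.C_apply, HahnSeries.single_mul_single]
  simp

lemma coeff_emb (p : k[X]) (n : ℤ) :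
    (emb p).coeff n = if n ≤ 0 then p.coeff (-n).toNat else 0 := by
  induction p using Polynomial.induction_on' with
  | add p q hp hq => rw [emb_add, HahnSeries.coeff_add, hp, hq]; split_ifs <;> simp
  | monomial i c =>
    rw [emb_monomial, HahnSeries.coeff_single, coeff_monomial]
    split_ifs <;> first | rfl | omega

lemma emb_injective : Function.Injective (emb : k[X] → LaurentSeries k) := by
  intro p q h
  ext i
  simpa [coeff_emb] using congrArg (fun F : LaurentSeries k => F.coeff (-(i : ℤ))) h

@[simp] lemma emb_eq_zero {p : k[X]} : emb p = 0 ↔ p = 0 := by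
  rw [← emb_zero, emb_injective.eq_iff]

@[simp] lemma lnorm_zero : lnorm (0 : LaurentSeries k) = 0 := if_pos rfl

lemma lnorm_of_ne_zero {F : LaurentSeries k} (hF : F ≠ 0) : lnorm F = (2 : ℝ) ^ (-F.order) :=
  if_neg hF

lemma lnorm_pos {F : LaurentSeries k} (hF : F ≠ 0) : 0 < lnorm F := by
  rw [lnorm_of_ne_zero hF]; positivity

lemma lnorm_nonneg (F : LaurentSeries k) : 0 ≤ lnorm F := by
  rcases eq_or_ne F 0 with rfl | hF
  · exact lnorm_zero.ge
  · exact (lnorm_pos hF).le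

@[simp] lemma lnorm_one : lnorm (1 : LaurentSeries k) = 1 := by
  simp [lnorm_of_ne_zero]

@[simp] lemma lnorm_neg (F : LaurentSeries k) : lnorm (-F) = lnorm F := by
  simp [lnorm, deg, HahnSeries.order_neg]

@[simp] lemma lnorm_mul (F G : LaurentSeries k) : lnorm (F * G) = lnorm F * lnorm G := by
  rcases eq_or_ne F 0 with rfl | hF
  · simp
  rcases eq_or_ne G 0 with rfl | hG
  · simp
  rw [lnorm_of_ne_zero hF, lnorm_of_ne_zero hG, lnorm_of_ne_zero (mul_ne_zero hF hG),
    HahnSeries.order_mul hF hG, neg_add, zpow_add₀ two_ne_zero]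

@[simp] lemma lnorm_inv (F : LaurentSeries k) : lnorm F⁻¹ = (lnorm F)⁻¹ := by
  rcases eq_or_ne F 0 with rfl | hF
  · simp
  · exact eq_inv_of_mul_eq_one_left (by rw [← lnorm_mul, inv_mul_cancel₀ hF, lnorm_one])

@[simp] lemma lnorm_div (F G : LaurentSeries k) : lnorm (F / G) = lnorm F / lnorm G := by
  rw [div_eq_mul_inv, lnorm_mul, lnorm_inv, div_eq_mul_inv]

lemma lnorm_le_zpow_neg_iff {F : LaurentSeries k} {n : ℤ} :
    lnorm F ≤ (2 : ℝ) ^ (-n) ↔ ∀ i < n, F.coeff i = 0 := by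
  rcases eq_or_ne F 0 with rfl | hF
  · simp only [lnorm_zero, HahnSeries.coeff_zero, implies_true, iff_true]; positivity
  · rw [lnorm_of_ne_zero hF, zpow_le_zpow_iff_right₀ one_lt_two, neg_le_neg_iff,
      HahnSeries.le_order_iff_forall hF]

lemma lnorm_sub_le_zpow_neg_iff {F G : LaurentSeries k} {n : ℤ} :
    lnorm (F - G) ≤ (2 : ℝ) ^ (-n) ↔ ∀ i < n, F.coeff i = G.coeff i := by
  simp only [lnorm_le_zpow_neg_iff, HahnSeries.coeff_sub, sub_eq_zero]

lemma isNonarchimedean_lnorm : IsNonarchimedean (lnorm : LaurentSeries k → ℝ) := by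
  intro F G
  rcases eq_or_ne F 0 with rfl | hF
  · simp
  rcases eq_or_ne G 0 with rfl | hG
  · simp
  rcases eq_or_ne (F + G) 0 with h | h
  · simp [h, lnorm_nonneg]
  · rw [lnorm_of_ne_zero hF, lnorm_of_ne_zero hG, lnorm_of_ne_zero h,
      ← (zpow_right_mono₀ one_le_two).map_max, max_neg_neg]
    exact zpow_le_zpow_right₀ one_le_two (neg_le_neg (HahnSeries.min_order_le_order_add h))

lemma lnorm_add_lt {F G : LaurentSeries k} {c : ℝ} (hF : lnorm F < c) (hG : lnorm G < c) :
    lnorm (F + G) < c :=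
  (isNonarchimedean_lnorm F G).trans_lt (max_lt hF hG)

lemma lnorm_sub_lt {F G : LaurentSeries k} {c : ℝ} (hF : lnorm F < c) (hG : lnorm G < c) :
    lnorm (F - G) < c := by
  rw [sub_eq_add_neg]
  exact lnorm_add_lt hF (by rwa [lnorm_neg])

lemma lnorm_add_eq_left_of_lt {F G : LaurentSeries k} (h : lnorm G < lnorm F) :
    lnorm (F + G) = lnorm F := by
  rw [IsNonarchimedean.add_eq_max_of_ne' lnorm isNonarchimedean_lnorm
    (fun H => (lnorm_neg H).symm) h.ne', max_eq_left h.le]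

lemma lnorm_emb {p : k[X]} (hp : p ≠ 0) : lnorm (emb p) = (2 : ℝ) ^ p.natDegree := by
  have hp' : emb p ≠ 0 := by simpa using hp
  have hle : (emb p).order ≤ -(p.natDegree : ℤ) :=
    HahnSeries.order_le_of_coeff_ne_zero (by simpa [coeff_emb] using hp)
  have hge : -(p.natDegree : ℤ) ≤ (emb p).order :=
    (HahnSeries.le_order_iff_forall hp').2 fun i hi => by
      rw [coeff_emb, if_pos (by omega), coeff_eq_zero_of_natDegree_lt (by omega)]
  rw [lnorm_of_ne_zero hp', hle.antisymm hge, neg_neg, zpow_natCast]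

lemma one_le_lnorm_emb {p : k[X]} (hp : p ≠ 0) : 1 ≤ lnorm (emb p) := by
  rw [lnorm_emb hp]
  exact one_le_pow₀ one_le_two

lemma eq_zero_of_lnorm_emb_lt_one {p : k[X]} (h : lnorm (emb p) < 1) : p = 0 :=
  by_contra fun hp => (one_le_lnorm_emb hp).not_gt h

lemma natDegree_pos_of_one_lt_lnorm_emb {p : k[X]} (h : 1 < lnorm (emb p)) : 0 < p.natDegree := by
  rcases eq_or_ne p 0 with rfl | hp
  · norm_num at h
  · rw [lnorm_emb hp] at h
    exact Nat.pos_of_ne_zero fun h₀ => by simp [h₀] at h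

lemma coeff_polyPart (F : LaurentSeries k) (i : ℕ) :
    (polyPart F).coeff i = F.coeff (-(i : ℤ)) := by
  simp only [polyPart, finsetSum_coeff, coeff_C_mul, coeff_X_pow, mul_ite, mul_one, mul_zero,
    Finset.sum_ite_eq, Finset.mem_range, ite_eq_left_iff, not_lt]
  intro h
  rw [HahnSeries.coeff_eq_zero_of_lt_order (by omega)]

lemma frac_eq_sub (F : LaurentSeries k) : frac F = F - emb (polyPart F) := by
  ext n
  rw [HahnSeries.coeff_sub, coeff_emb, coeff_polyPart]
  by_cases h : n ≤ 0
  · simp [frac, h, show ¬ 1 ≤ n by omega]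
  · simp [frac, h, show 1 ≤ n by omega]

lemma fnorm_eq_lnorm_sub_polyPart (F : LaurentSeries k) :
    fnorm F = lnorm (F - emb (polyPart F)) := by
  rw [fnorm, frac_eq_sub]

lemma fnorm_nonneg (F : LaurentSeries k) : 0 ≤ fnorm F := lnorm_nonneg _

lemma fnorm_lt_one (F : LaurentSeries k) : fnorm F < 1 := by
  have h : lnorm (frac F) ≤ (2 : ℝ) ^ (-1 : ℤ) :=
    lnorm_le_zpow_neg_iff.2 fun i hi => by simp [frac, show ¬ 1 ≤ i by omega]
  exact h.trans_lt (by norm_num)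

lemma lnorm_sub_polyPart_lt_one (F : LaurentSeries k) : lnorm (F - emb (polyPart F)) < 1 :=
  fnorm_eq_lnorm_sub_polyPart F ▸ fnorm_lt_one F

lemma polyPart_eq_of_lnorm_sub_lt_one {F : LaurentSeries k} {p : k[X]}
    (h : lnorm (F - emb p) < 1) : polyPart F = p := by
  have hsub := lnorm_sub_lt h (lnorm_sub_polyPart_lt_one F)
  rw [sub_sub_sub_cancel_left, ← emb_sub] at hsub
  exact sub_eq_zero.1 (eq_zero_of_lnorm_emb_lt_one hsub)

lemma fnorm_eq_lnorm_sub {F : LaurentSeries k} {p : k[X]} (h : lnorm (F - emb p) < 1) :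
    fnorm F = lnorm (F - emb p) := by
  rw [fnorm_eq_lnorm_sub_polyPart, polyPart_eq_of_lnorm_sub_lt_one h]

lemma lnorm_emb_polyPart {F : LaurentSeries k} (hF : 1 ≤ lnorm F) :
    lnorm (emb (polyPart F)) = lnorm F := by
  have hlt : lnorm (-(F - emb (polyPart F))) < lnorm F := by
    rw [lnorm_neg]
    exact (lnorm_sub_polyPart_lt_one F).trans_le hF
  simpa using lnorm_add_eq_left_of_lt hlt

lemma fnorm_emb_mul {A : k[X]} {F : LaurentSeries k} (h : lnorm (emb A) * fnorm F < 1) :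
    fnorm (emb A * F) = lnorm (emb A) * fnorm F := by
  have heq : lnorm (emb A * F - emb (A * polyPart F)) = lnorm (emb A) * fnorm F := by
    rw [emb_mul, ← mul_sub, lnorm_mul, fnorm_eq_lnorm_sub_polyPart]
  rw [fnorm_eq_lnorm_sub (heq.trans_lt h), heq]

lemma fnorm_eq_fnorm_of_add_add_emb_eq_zero {F G : LaurentSeries k} {C : k[X]}
    (h : F + G + emb C = 0) : fnorm F = fnorm G := by
  have heq : F - emb (-polyPart G - C) = -(G - emb (polyPart G)) := by
    rw [emb_sub, emb_neg]
    linear_combination h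
  have hlt : lnorm (F - emb (-polyPart G - C)) < 1 := by
    rw [heq, lnorm_neg]
    exact lnorm_sub_polyPart_lt_one G
  rw [fnorm_eq_lnorm_sub hlt, heq, lnorm_neg, fnorm_eq_lnorm_sub_polyPart]

lemma isRat_emb (p : k[X]) : IsRat (emb p) := ⟨p, 1, one_ne_zero, by simp⟩

lemma IsRat.add_emb {F : LaurentSeries k} (hF : IsRat F) (r : k[X]) : IsRat (F + emb r) := by
  obtain ⟨p, q, hq, h⟩ := hF
  exact ⟨p + r * q, q, hq, by rw [add_mul, h, emb_add, emb_mul]⟩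

lemma IsRat.inv {F : LaurentSeries k} (hF : IsRat F) : IsRat F⁻¹ := by
  rcases eq_or_ne F 0 with rfl | hF₀
  · simpa using isRat_emb (0 : k[X])
  obtain ⟨p, q, hq, h⟩ := hF
  have hp : emb p ≠ 0 := h ▸ mul_ne_zero hF₀ (by simpa using hq)
  exact ⟨q, p, by simpa using hp, by rw [← h, inv_mul_cancel_left₀ hF₀]⟩

lemma Bad.not_isRat {F : LaurentSeries k} (hF : Bad F) : ¬ IsRat F := by
  rintro ⟨p, q, hq, h⟩
  obtain ⟨c, hc, hle⟩ := hF
  have hzero : fnorm (emb q * F) = 0 := by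
    rw [mul_comm, h, fnorm_eq_lnorm_sub (p := p) (by simp), sub_self, lnorm_zero]
  have := hle q hq
  rw [hzero, mul_zero] at this
  exact hc.not_ge this

lemma eq_zero_of_forall_exists_fnorm_lt {F G : LaurentSeries k} (hG : ¬ IsRat G)
    (h : ∀ c : ℝ, ∃ q : k[X], c * fnorm (emb q * F) < 1 ∧
      c * fnorm (emb q * G) < fnorm (emb q * F))
    {A B C : k[X]} (hrel : emb A * F + emb B * G + emb C = 0) : A = 0 ∧ B = 0 ∧ C = 0 := by
  have hA : A = 0 := by
    by_contra hA
    obtain ⟨q, hqF, hqG⟩ := h (max (lnorm (emb A)) (lnorm (emb B)))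
    have hAq : lnorm (emb A) * fnorm (emb q * F) < 1 :=
      (mul_le_mul_of_nonneg_right (le_max_left _ _) (fnorm_nonneg _)).trans_lt hqF
    have hBq : lnorm (emb B) * fnorm (emb q * G) < fnorm (emb q * F) :=
      (mul_le_mul_of_nonneg_right (le_max_right _ _) (fnorm_nonneg _)).trans_lt hqG
    have heq : fnorm (emb A * (emb q * F)) = fnorm (emb B * (emb q * G)) :=
      fnorm_eq_fnorm_of_add_add_emb_eq_zero (C := q * C) (by
        rw [emb_mul]
        linear_combination emb q * hrel)
    rw [fnorm_emb_mul hAq, fnorm_emb_mul (hBq.trans (fnorm_lt_one _))] at heq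
    exact (hBq.trans_le (le_mul_of_one_le_left (fnorm_nonneg _) (one_le_lnorm_emb hA))).ne heq.symm
  subst hA
  have hB : B = 0 := by
    by_contra hB
    refine hG ⟨-C, B, hB, ?_⟩
    rw [emb_neg, mul_comm]
    simpa using eq_neg_of_add_eq_zero_left hrel
  subst hB
  simpa using hrel

/-! ### Continuants and continued fraction expansions -/

section Continuants

variable {a b : ℕ → k[X]}

@[simp] lemma den_zero (a : ℕ → k[X]) : den a 0 = 1 := rfl

@[simp] lemma den_one (a : ℕ → k[X]) : den a 1 = a 1 := rfl

lemma den_add_two (a : ℕ → k[X]) (n : ℕ) :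
    den a (n + 2) = a (n + 2) * den a (n + 1) + den a n := rfl

@[simp] lemma num_zero (a : ℕ → k[X]) : num a 0 = a 0 := rfl

@[simp] lemma num_one (a : ℕ → k[X]) : num a 1 = a 1 * a 0 + 1 := rfl

lemma num_add_two (a : ℕ → k[X]) (n : ℕ) :
    num a (n + 2) = a (n + 2) * num a (n + 1) + num a n := rfl

lemma num_mul_den_sub_den_mul_num (a : ℕ → k[X]) (n : ℕ) :
    num a (n + 1) * den a n - den a (n + 1) * num a n = (-1) ^ n := by
  induction n with
  | zero => simp
  | succ n ih =>
    rw [num_add_two, den_add_two, pow_succ, ← ih]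
    ring

lemma den_add_of_reverse {s n : ℕ} (h : ∀ i j, i + j = n → b (s + 2 + i) = a (j + 1)) :
    den b (s + 2 + n) = den b (s + 1) * den a (n + 1) + den b s * den a n := by
  induction n generalizing s with
  | zero => simp [den_add_two, ← h 0 0 rfl, mul_comm]
  | succ n ih =>
    have htail : den b (s + 2 + (n + 1)) =
        den b (s + 2) * den a (n + 1) + den b (s + 1) * den a n := by
      rw [← Nat.succ_add_eq_add_succ]
      refine ih fun i j hij => ?_
      rw [← h (i + 1) j (by omega)]
      congr 1
      omega
    have hhead : b (s + 2) = a (n + 2) := h 0 (n + 1) (zero_add _)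
    rw [htail, den_add_two b, den_add_two a, hhead]
    ring

lemma degree_den_lt_degree_den_succ (ha : ∀ n, 0 < (a (n + 1)).natDegree) (n : ℕ) :
    (den a n).degree < (den a (n + 1)).degree := by
  induction n with
  | zero => simpa using natDegree_pos_iff_degree_pos.1 (ha 0)
  | succ n ih =>
    have hlt : (den a (n + 1)).degree < (a (n + 2) * den a (n + 1)).degree := by
      have hden : den a (n + 1) ≠ 0 := ne_zero_of_degree_gt ih
      have ha₂ : a (n + 2) ≠ 0 := ne_zero_of_natDegree_gt (ha (n + 1))
      refine degree_lt_degree ?_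
      rw [natDegree_mul ha₂ hden]
      exact Nat.lt_add_of_pos_left (ha (n + 1))
    rw [den_add_two, degree_add_eq_left_of_degree_lt (ih.trans hlt)]
    exact hlt

lemma den_ne_zero (ha : ∀ n, 0 < (a (n + 1)).natDegree) (n : ℕ) : den a n ≠ 0 := by
  cases n with
  | zero => exact one_ne_zero
  | succ n => exact ne_zero_of_degree_gt (degree_den_lt_degree_den_succ ha n)

lemma natDegree_den_lt_natDegree_den_succ (ha : ∀ n, 0 < (a (n + 1)).natDegree) (n : ℕ) :
    (den a n).natDegree < (den a (n + 1)).natDegree :=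
  natDegree_lt_natDegree (den_ne_zero ha n) (degree_den_lt_degree_den_succ ha n)

lemma natDegree_den_succ (ha : ∀ n, 0 < (a (n + 1)).natDegree) (n : ℕ) :
    (den a (n + 1)).natDegree = (a (n + 1)).natDegree + (den a n).natDegree := by
  cases n with
  | zero => simp
  | succ n =>
    have hmul : (a (n + 2) * den a (n + 1)).natDegree =
        (a (n + 2)).natDegree + (den a (n + 1)).natDegree :=
      natDegree_mul (ne_zero_of_natDegree_gt (ha (n + 1))) (den_ne_zero ha _)
    have hlt := natDegree_den_lt_natDegree_den_succ ha n
    rw [den_add_two, natDegree_add_eq_left_of_natDegree_lt (by omega), hmul]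

lemma strictMono_natDegree_den (ha : ∀ n, 0 < (a (n + 1)).natDegree) :
    StrictMono fun n => (den a n).natDegree :=
  strictMono_nat_of_lt_succ (natDegree_den_lt_natDegree_den_succ ha)

lemma le_natDegree_den (ha : ∀ n, 0 < (a (n + 1)).natDegree) (n : ℕ) :
    n ≤ (den a n).natDegree :=
  (strictMono_natDegree_den ha).le_apply

lemma natDegree_den_le (ha : ∀ n, 0 < (a (n + 1)).natDegree) {D : ℕ}
    (hD : ∀ n, (a (n + 1)).natDegree ≤ D) (n : ℕ) : (den a n).natDegree ≤ D * n := by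
  induction n with
  | zero => simp
  | succ n ih =>
    rw [natDegree_den_succ ha, mul_add_one, add_comm]
    exact add_le_add ih (hD n)

end Continuants

section Expansion

variable {a b : ℕ → k[X]} {F : LaurentSeries k}

/-- The error `q_n F - p_n` of the `n`-th convergent of the continued fraction with partial
quotients `a`, as an approximation to `F`. -/
def cfError (a : ℕ → k[X]) (F : LaurentSeries k) (n : ℕ) : LaurentSeries k :=
  emb (den a n) * F - emb (num a n)

lemma cfError_zero (a : ℕ → k[X]) (F : LaurentSeries k) : cfError a F 0 = F - emb (a 0) := by
  simp [cfError]

lemma cfError_one (a : ℕ → k[X]) (F : LaurentSeries k) :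
    cfError a F 1 = emb (a 1) * cfError a F 0 - 1 := by
  simp only [cfError, den_one, num_one, den_zero, num_zero, emb_add, emb_mul, emb_one]
  ring

lemma cfError_add_two (a : ℕ → k[X]) (F : LaurentSeries k) (n : ℕ) :
    cfError a F (n + 2) = emb (a (n + 2)) * cfError a F (n + 1) + cfError a F n := by
  simp only [cfError, den_add_two, num_add_two, emb_add, emb_mul]
  ring

lemma cfError_congr (F : LaurentSeries k) {n : ℕ} (h : ∀ i ≤ n, a i = b i) :
    cfError a F n = cfError b F n := by
  induction n using Nat.twoStepInduction with
  | zero => rw [cfError_zero, cfError_zero, h 0 le_rfl]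
  | one => rw [cfError_one, cfError_one, cfError_zero, cfError_zero, h 0 zero_le_one, h 1 le_rfl]
  | more n ih₁ ih₂ =>
    rw [cfError_add_two, cfError_add_two, h _ le_rfl, ih₁ fun i hi => h i (by omega),
      ih₂ fun i hi => h i (by omega)]

lemma cfError_succ_sub_cfError_succ (F : LaurentSeries k) {n : ℕ} (h : ∀ i ≤ n, a i = b i) :
    cfError a F (n + 1) - cfError b F (n + 1) =
      emb (a (n + 1) - b (n + 1)) * cfError a F n := by
  cases n with
  | zero =>
    rw [cfError_one, cfError_one, ← cfError_congr F h, emb_sub]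
    ring
  | succ n =>
    rw [cfError_add_two, cfError_add_two, ← cfError_congr F h,
      ← cfError_congr F fun i hi => h i (hi.trans n.le_succ), emb_sub]
    ring

/-- `a` is the sequence of partial quotients of the irrational series `F`: its terms after the
first are nonconstant, and the convergents satisfy `|q_n F - p_n| = 1 / |q_{n+1}|`. -/
structure IsExpansion (a : ℕ → k[X]) (F : LaurentSeries k) : Prop where
  natDegree_pos : ∀ n, 0 < (a (n + 1)).natDegree
  lnorm_cfError_mul : ∀ n, lnorm (cfError a F n) * lnorm (emb (den a (n + 1))) = 1

lemma IsExpansion.lnorm_cfError (h : IsExpansion a F) (n : ℕ) :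
    lnorm (cfError a F n) = (2 ^ (den a (n + 1)).natDegree)⁻¹ := by
  rw [← lnorm_emb (den_ne_zero h.natDegree_pos _)]
  exact eq_inv_of_mul_eq_one_left (h.lnorm_cfError_mul n)

lemma IsExpansion.lnorm_cfError_succ_lt (h : IsExpansion a F) (n : ℕ) :
    lnorm (cfError a F (n + 1)) < lnorm (cfError a F n) := by
  rw [h.lnorm_cfError, h.lnorm_cfError]
  exact inv_strictAnti₀ (by positivity)
    (pow_lt_pow_right₀ one_lt_two (natDegree_den_lt_natDegree_den_succ h.natDegree_pos _))

lemma IsExpansion.lnorm_cfError_lt_one (h : IsExpansion a F) (n : ℕ) :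
    lnorm (cfError a F n) < 1 := by
  have := le_natDegree_den h.natDegree_pos (n + 1)
  rw [h.lnorm_cfError]
  exact inv_lt_one_of_one_lt₀ (one_lt_pow₀ one_lt_two (by omega))

lemma IsExpansion.fnorm_den_mul (h : IsExpansion a F) (n : ℕ) :
    fnorm (emb (den a n) * F) = (2 ^ (den a (n + 1)).natDegree)⁻¹ := by
  rw [← h.lnorm_cfError]
  exact fnorm_eq_lnorm_sub (h.lnorm_cfError_lt_one n)

lemma IsExpansion.unique (ha : IsExpansion a F) (hb : IsExpansion b F) : a = b := by
  ext1 n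
  induction n using Nat.strong_induction_on with
  | _ n ih =>
    cases n with
    | zero =>
      have ha₀ := ha.lnorm_cfError_lt_one 0
      have hb₀ := hb.lnorm_cfError_lt_one 0
      rw [cfError_zero] at ha₀ hb₀
      rw [← polyPart_eq_of_lnorm_sub_lt_one ha₀, polyPart_eq_of_lnorm_sub_lt_one hb₀]
    | succ n =>
      have hagree : ∀ i ≤ n, a i = b i := fun i hi => ih i (Nat.lt_succ_of_le hi)
      have hlt : lnorm (emb (a (n + 1) - b (n + 1)) * cfError a F n) < lnorm (cfError a F n) := by
        rw [← cfError_succ_sub_cfError_succ F hagree]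
        refine lnorm_sub_lt (ha.lnorm_cfError_succ_lt n) ?_
        rw [cfError_congr F hagree]
        exact hb.lnorm_cfError_succ_lt n
      rw [lnorm_mul, mul_lt_iff_lt_one_left ((lnorm_nonneg _).trans_lt
        (ha.lnorm_cfError_succ_lt n))] at hlt
      exact sub_eq_zero.1 (eq_zero_of_lnorm_emb_lt_one hlt)

lemma mul_num_ne_mul_den_of_natDegree_lt {p q : k[X]} (hq : q ≠ 0) {n : ℕ}
    (hn : q.natDegree < (den a (n + 1)).natDegree) : q * num a (n + 1) ≠ p * den a (n + 1) := by
  intro h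
  have hdvd : den a (n + 1) ∣ q * (-1) ^ n := by
    rw [← num_mul_den_sub_den_mul_num a n]
    refine ⟨p * den a n - q * num a n, ?_⟩
    linear_combination (den a n) * h
  have := natDegree_le_of_dvd ((isUnit_one.neg.pow n).dvd_mul_right.1 hdvd) hq
  omega

lemma IsExpansion.le_lnorm_sub_of_natDegree_lt (h : IsExpansion a F) {p q : k[X]} (hq : q ≠ 0)
    {n : ℕ} (hn : q.natDegree < (den a (n + 1)).natDegree) :
    (2 ^ (den a (n + 1)).natDegree)⁻¹ ≤ lnorm (emb q * F - emb p) := by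
  by_contra! hlt
  refine mul_num_ne_mul_den_of_natDegree_lt hq hn
    (sub_eq_zero.1 (eq_zero_of_lnorm_emb_lt_one (p := _ - p * den a (n + 1)) ?_))
  have hdet : emb (q * num a (n + 1) - p * den a (n + 1)) =
      emb (den a (n + 1)) * (emb q * F - emb p) - emb q * cfError a F (n + 1) := by
    simp only [cfError, emb_sub, emb_mul]
    ring
  rw [hdet]
  refine lnorm_sub_lt ?_ ?_
  · rw [lnorm_mul, lnorm_emb (den_ne_zero h.natDegree_pos _)]
    exact (lt_inv_mul_iff₀ (by positivity)).1 (by simpa using hlt)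
  · rw [lnorm_mul, h.lnorm_cfError, lnorm_emb hq, ← div_eq_mul_inv, div_lt_one (by positivity)]
    exact pow_lt_pow_right₀ one_lt_two
      (hn.trans (natDegree_den_lt_natDegree_den_succ h.natDegree_pos _))

lemma IsExpansion.bad (h : IsExpansion a F) {D : ℕ} (hD : ∀ n, (a (n + 1)).natDegree ≤ D) :
    Bad F := by
  refine ⟨(2 ^ D)⁻¹, by positivity, fun q hq => ?_⟩
  have hmono := strictMono_natDegree_den h.natDegree_pos
  obtain ⟨n, hle, hlt⟩ : ∃ n, (den a n).natDegree < q.natDegree + 1 ∧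
      q.natDegree + 1 ≤ (den a (n + 1)).natDegree :=
    hmono.exists_between_of_tendsto_atTop hmono.tendsto_atTop (by simp)
  have hexp : (den a (n + 1)).natDegree ≤ q.natDegree + D := by
    rw [natDegree_den_succ h.natDegree_pos]
    have := hD n
    omega
  calc ((2 : ℝ) ^ D)⁻¹ = 2 ^ q.natDegree * (2 ^ (q.natDegree + D))⁻¹ := by
        rw [pow_add]
        field_simp
    _ ≤ 2 ^ q.natDegree * (2 ^ (den a (n + 1)).natDegree)⁻¹ := by
        gcongr
        exact one_le_two
    _ ≤ lnorm (emb q) * fnorm (emb q * F) := by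
        rw [fnorm_eq_lnorm_sub_polyPart, lnorm_emb hq]
        gcongr
        exact h.le_lnorm_sub_of_natDegree_lt hq hlt

lemma Bad.exists_natDegree_le (hF : Bad F) (h : IsExpansion a F) :
    ∃ M : ℕ, ∀ n, (a (n + 1)).natDegree ≤ M := by
  obtain ⟨c, hc, hle⟩ := hF
  obtain ⟨M, hM⟩ := pow_unbounded_of_one_lt c⁻¹ one_lt_two
  refine ⟨M, fun n => ?_⟩
  have hn := hle _ (den_ne_zero h.natDegree_pos n)
  rw [h.fnorm_den_mul, natDegree_den_succ h.natDegree_pos,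
    lnorm_emb (den_ne_zero h.natDegree_pos n), pow_add, mul_inv, mul_left_comm,
    mul_inv_cancel₀ (by positivity), mul_one, le_inv_comm₀ hc (by positivity)] at hn
  exact ((pow_lt_pow_iff_right₀ one_lt_two).1 (hn.trans_lt hM)).le

end Expansion

section Algorithm

variable {F : LaurentSeries k}

lemma not_isRat_cfRem (hF : ¬ IsRat F) (n : ℕ) : ¬ IsRat (cfRem F n) := by
  induction n with
  | zero => exact hF
  | succ n ih => exact fun h => ih (by simpa [cfRem] using h.inv.add_emb (polyPart (cfRem F n)))

lemma cfRem_sub_ne_zero (hF : ¬ IsRat F) (n : ℕ) : cfRem F n - emb (pq F n) ≠ 0 := fun h =>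
  not_isRat_cfRem hF n (sub_eq_zero.1 h ▸ isRat_emb _)

lemma cfRem_sub_mul_cfRem_succ (hF : ¬ IsRat F) (n : ℕ) :
    (cfRem F n - emb (pq F n)) * cfRem F (n + 1) = 1 :=
  mul_inv_cancel₀ (cfRem_sub_ne_zero hF n)

lemma one_lt_lnorm_cfRem_succ (hF : ¬ IsRat F) (n : ℕ) : 1 < lnorm (cfRem F (n + 1)) := by
  rw [cfRem, lnorm_inv]
  exact (one_lt_inv₀ (lnorm_pos (cfRem_sub_ne_zero hF n))).2 (lnorm_sub_polyPart_lt_one _)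

lemma lnorm_emb_pq_succ (hF : ¬ IsRat F) (n : ℕ) :
    lnorm (emb (pq F (n + 1))) = lnorm (cfRem F (n + 1)) :=
  lnorm_emb_polyPart (one_lt_lnorm_cfRem_succ hF n).le

lemma natDegree_pq_succ_pos (hF : ¬ IsRat F) (n : ℕ) : 0 < (pq F (n + 1)).natDegree :=
  natDegree_pos_of_one_lt_lnorm_emb
    ((one_lt_lnorm_cfRem_succ hF n).trans_eq (lnorm_emb_pq_succ hF n).symm)

lemma cfError_pq_succ_mul_cfRem (hF : ¬ IsRat F) (n : ℕ) :
    cfError (pq F) F (n + 1) * cfRem F (n + 2) = -cfError (pq F) F n := by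
  induction n with
  | zero =>
    have h₀ : (F - emb (pq F 0)) * cfRem F 1 = 1 := cfRem_sub_mul_cfRem_succ hF 0
    have h₁ := cfRem_sub_mul_cfRem_succ hF 1
    simp only [zero_add, Nat.reduceAdd, cfError_one, cfError_zero] at h₁ ⊢
    linear_combination (cfRem F 2) * h₀ - (F - emb (pq F 0)) * h₁
  | succ n ih =>
    rw [cfError_add_two]
    linear_combination (cfRem F (n + 3)) * ih -
      cfError (pq F) F (n + 1) * cfRem_sub_mul_cfRem_succ hF (n + 2)

lemma isExpansion_pq (hF : ¬ IsRat F) : IsExpansion (pq F) F := by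
  refine ⟨natDegree_pq_succ_pos hF, fun n => ?_⟩
  induction n with
  | zero =>
    rw [den_one, lnorm_emb_pq_succ hF, ← lnorm_mul, cfError_zero]
    exact (congrArg lnorm (cfRem_sub_mul_cfRem_succ hF 0)).trans lnorm_one
  | succ n ih =>
    have hden : lnorm (emb (den (pq F) (n + 2))) =
        lnorm (cfRem F (n + 2)) * lnorm (emb (den (pq F) (n + 1))) := by
      have hpos := natDegree_pq_succ_pos hF
      rw [← lnorm_emb_pq_succ hF, lnorm_emb (den_ne_zero hpos _), lnorm_emb (den_ne_zero hpos _),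
        lnorm_emb (ne_zero_of_natDegree_gt (hpos (n + 1))), natDegree_den_succ hpos, pow_add]
    rw [hden, ← mul_assoc, ← lnorm_mul, cfError_pq_succ_mul_cfRem hF, lnorm_neg, ih]

end Algorithm

section Limits

variable {a : ℕ → k[X]}

lemma exists_lnorm_sub_le_of_lnorm_succ_sub_le {f : ℕ → LaurentSeries k} {e : ℕ → ℤ}
    (he : Monotone e) (he' : Tendsto e atTop atTop)
    (hf : ∀ n, lnorm (f (n + 1) - f n) ≤ 2 ^ (-e n)) :
    ∃ F, ∀ n, lnorm (F - f n) ≤ 2 ^ (-e n) := by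
  have hstable {n m : ℕ} (hnm : n ≤ m) : ∀ i < e n, (f m).coeff i = (f n).coeff i := by
    induction m, hnm using Nat.le_induction with
    | base => exact fun _ _ => rfl
    | succ m hnm ih =>
      exact fun i hi =>
        (lnorm_sub_le_zpow_neg_iff.1 (hf m) i (hi.trans_le (he hnm))).trans (ih i hi)
  have hex (i : ℤ) : ∃ n, i < e n := (he'.eventually_gt_atTop i).exists
  let c (i : ℤ) : k := (f (Nat.find (hex i))).coeff i
  have hc {n : ℕ} {i : ℤ} (hi : i < e n) : c i = (f n).coeff i :=
    (hstable (Nat.find_min' (hex i) hi) i (Nat.find_spec (hex i))).symm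
  have hbdd : BddBelow (Function.support c) := by
    refine ⟨min (e 0) (f 0).order, fun i hi => ?_⟩
    by_contra! hlt
    obtain ⟨hi₀, hord⟩ := lt_min_iff.1 hlt
    exact hi ((hc hi₀).trans (HahnSeries.coeff_eq_zero_of_lt_order hord))
  exact ⟨HahnSeries.ofSuppBddBelow c hbdd, fun n => lnorm_sub_le_zpow_neg_iff.2 fun i hi => hc hi⟩

/-- The `n`-th convergent `p_n / q_n` of the continued fraction with partial quotients `a`. -/
def convergent (a : ℕ → k[X]) (n : ℕ) : LaurentSeries k := emb (num a n) / emb (den a n)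

lemma lnorm_convergent_succ_sub (ha : ∀ n, 0 < (a (n + 1)).natDegree) (n : ℕ) :
    lnorm (convergent a (n + 1) - convergent a n) =
      2 ^ (-((den a (n + 1)).natDegree + (den a n).natDegree : ℤ)) := by
  have hden (n : ℕ) : emb (den a n) ≠ 0 := by simpa using den_ne_zero ha n
  have hunit : IsUnit ((-1 : k[X]) ^ n) := isUnit_one.neg.pow n
  rw [convergent, convergent, div_sub_div _ _ (hden _) (hden _), ← emb_mul, ← emb_mul, ← emb_sub,
    num_mul_den_sub_den_mul_num, lnorm_div, lnorm_mul, lnorm_emb hunit.ne_zero,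
    natDegree_eq_zero_of_isUnit hunit, lnorm_emb (den_ne_zero ha _), lnorm_emb (den_ne_zero ha _),
    ← pow_add, pow_zero, one_div, zpow_neg]
  norm_cast

lemma exists_isExpansion (ha : ∀ n, 0 < (a (n + 1)).natDegree) : ∃ F, IsExpansion a F := by
  have hden (n : ℕ) : emb (den a n) ≠ 0 := by simpa using den_ne_zero ha n
  have hmono : StrictMono fun n => ((den a (n + 1)).natDegree + (den a n).natDegree : ℤ) :=
    strictMono_nat_of_lt_succ fun n => by
      have h₀ := natDegree_den_lt_natDegree_den_succ ha n
      have h₁ := natDegree_den_lt_natDegree_den_succ ha (n + 1)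
      omega
  have htendsto : Tendsto (fun n => ((den a (n + 1)).natDegree + (den a n).natDegree : ℤ))
      atTop atTop := tendsto_atTop_mono (fun n => by
        have := le_natDegree_den ha n
        omega) tendsto_natCast_atTop_atTop
  obtain ⟨F, hF⟩ := exists_lnorm_sub_le_of_lnorm_succ_sub_le hmono.monotone htendsto
    fun n => (lnorm_convergent_succ_sub ha n).le
  refine ⟨F, ha, fun n => ?_⟩
  have hlt : lnorm (F - convergent a (n + 1)) <
      lnorm (convergent a (n + 1) - convergent a n) := by
    rw [lnorm_convergent_succ_sub ha]
    exact (hF (n + 1)).trans_lt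
      (zpow_lt_zpow_right₀ one_lt_two (neg_lt_neg (hmono n.lt_succ_self)))
  have hdist : lnorm (F - convergent a n) =
      (lnorm (emb (den a (n + 1))) * lnorm (emb (den a n)))⁻¹ := by
    rw [← sub_add_sub_cancel', lnorm_add_eq_left_of_lt hlt, lnorm_convergent_succ_sub ha,
      lnorm_emb (den_ne_zero ha _), lnorm_emb (den_ne_zero ha _), ← pow_add, zpow_neg]
    norm_cast
  have herror : cfError a F n = emb (den a n) * (F - convergent a n) := by
    rw [cfError, convergent, mul_sub, mul_div_cancel₀ _ (hden n)]
  have := (lnorm_pos (hden n)).ne'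
  have := (lnorm_pos (hden (n + 1))).ne'
  rw [herror, lnorm_mul, hdist]
  field_simp

end Limits

/-! ### Mirror blocks -/

section MirrorBlock

variable {a b : ℕ → k[X]} {F G : LaurentSeries k} {s n : ℕ}

/-- The sequence `b` has at `s + 1` a separator, of degree exceeding the degrees of all `a (i + 1)`,
followed by the mirrored word `a (n + 1), …, a 1`, which is long compared with the degree of the
denominator at the separator. -/
structure IsMirrorBlock (a b : ℕ → k[X]) (s n : ℕ) : Prop where
  natDegree_lt : ∀ i, (a (i + 1)).natDegree < (b (s + 1)).natDegree
  eq_reverse : ∀ i j, i + j = n → b (s + 2 + i) = a (j + 1)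
  natDegree_den_add_le : (den b (s + 1)).natDegree + s ≤ n

lemma IsMirrorBlock.natDegree_den (h : IsMirrorBlock a b s n)
    (ha : ∀ n, 0 < (a (n + 1)).natDegree) (hb : ∀ n, 0 < (b (n + 1)).natDegree) :
    (den b (s + 2 + n)).natDegree = (den b (s + 1)).natDegree + (den a (n + 1)).natDegree := by
  have hmul : (den b (s + 1) * den a (n + 1)).natDegree = _ :=
    natDegree_mul (den_ne_zero hb _) (den_ne_zero ha _)
  have hmul' : (den b s * den a n).natDegree = _ :=
    natDegree_mul (den_ne_zero hb _) (den_ne_zero ha _)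
  have hlta := natDegree_den_lt_natDegree_den_succ ha n
  have hltb := natDegree_den_lt_natDegree_den_succ hb s
  rw [den_add_of_reverse h.eq_reverse, natDegree_add_eq_left_of_natDegree_lt (by omega), hmul]

lemma IsMirrorBlock.emb_den_mul_sub (h : IsMirrorBlock a b s n) (F : LaurentSeries k) :
    emb (den b (s + 2 + n)) * F - emb (den b (s + 1) * num a (n + 1) + den b s * num a n) =
      emb (den b (s + 1)) * cfError a F (n + 1) + emb (den b s) * cfError a F n := by
  simp only [den_add_of_reverse h.eq_reverse, cfError, emb_add, emb_mul]
  ring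

/-- The separator makes the first term of `IsMirrorBlock.emb_den_mul_sub` dominant. -/
lemma IsMirrorBlock.fnorm_den_mul_left (h : IsMirrorBlock a b s n) (ha : IsExpansion a F)
    (hb : ∀ n, 0 < (b (n + 1)).natDegree) :
    fnorm (emb (den b (s + 2 + n)) * F) =
      2 ^ (den b (s + 1)).natDegree / 2 ^ (den a (n + 2)).natDegree := by
  have hfirst : lnorm (emb (den b (s + 1)) * cfError a F (n + 1)) =
      2 ^ (den b (s + 1)).natDegree / 2 ^ (den a (n + 2)).natDegree := by
    rw [lnorm_mul, lnorm_emb (den_ne_zero hb _), ha.lnorm_cfError, div_eq_mul_inv]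
  have hlt : lnorm (emb (den b s) * cfError a F n) <
      lnorm (emb (den b (s + 1)) * cfError a F (n + 1)) := by
    rw [hfirst, lnorm_mul, lnorm_emb (den_ne_zero hb _), ha.lnorm_cfError, ← div_eq_mul_inv,
      div_lt_div_iff₀ (by positivity) (by positivity), ← pow_add, ← pow_add,
      natDegree_den_succ hb s, natDegree_den_succ ha.natDegree_pos (n + 1)]
    have := h.natDegree_lt (n + 1)
    exact pow_lt_pow_right₀ one_lt_two (by omega)
  have hnorm := (congrArg lnorm (h.emb_den_mul_sub F)).trans
    ((lnorm_add_eq_left_of_lt hlt).trans hfirst)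
  rw [← hnorm]
  refine fnorm_eq_lnorm_sub ?_
  rw [hnorm, div_lt_one (by positivity)]
  have hlen := h.natDegree_den_add_le
  have := le_natDegree_den ha.natDegree_pos (n + 2)
  exact pow_lt_pow_right₀ one_lt_two (by omega)

lemma IsMirrorBlock.pow_mul_fnorm_left_lt_one (h : IsMirrorBlock a b s n) (ha : IsExpansion a F)
    (hb : ∀ n, 0 < (b (n + 1)).natDegree) : 2 ^ s * fnorm (emb (den b (s + 2 + n)) * F) < 1 := by
  have hlen := h.natDegree_den_add_le
  have := le_natDegree_den ha.natDegree_pos (n + 2)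
  rw [h.fnorm_den_mul_left ha hb, ← mul_div_assoc, ← pow_add, div_lt_one (by positivity)]
  exact pow_lt_pow_right₀ one_lt_two (by omega)

lemma IsMirrorBlock.pow_mul_fnorm_right_lt (h : IsMirrorBlock a b s n) (ha : IsExpansion a F)
    (hb : IsExpansion b G) : 2 ^ s * fnorm (emb (den b (s + 2 + n)) * G) <
      fnorm (emb (den b (s + 2 + n)) * F) := by
  rw [h.fnorm_den_mul_left ha hb.natDegree_pos, hb.fnorm_den_mul, ← div_eq_mul_inv,
    div_lt_div_iff₀ (by positivity) (by positivity), ← pow_add, ← pow_add]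
  have hq := h.natDegree_den ha.natDegree_pos hb.natDegree_pos
  have hq' := natDegree_den_lt_natDegree_den_succ hb.natDegree_pos (s + 2 + n)
  have hsep := h.natDegree_lt (n + 1)
  have ha' : (den a (n + 2)).natDegree = _ := natDegree_den_succ ha.natDegree_pos (n + 1)
  have hb' := natDegree_den_succ hb.natDegree_pos s
  have hs := le_natDegree_den hb.natDegree_pos s
  exact pow_lt_pow_right₀ one_lt_two (by omega)

lemma IsMirrorBlock.lnorm_sq_mul_fnorm_mul_fnorm_le (h : IsMirrorBlock a b s n)
    (ha : IsExpansion a F) (hb : IsExpansion b G) :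
    lnorm (emb (den b (s + 2 + n))) ^ 2 * fnorm (emb (den b (s + 2 + n)) * F) *
      fnorm (emb (den b (s + 2 + n)) * G) ≤ 2 ^ (2 * (den b (s + 1)).natDegree) := by
  have hq := h.natDegree_den ha.natDegree_pos hb.natDegree_pos
  have hq' := natDegree_den_lt_natDegree_den_succ hb.natDegree_pos (s + 2 + n)
  have ha' : _ < (den a (n + 2)).natDegree :=
    natDegree_den_lt_natDegree_den_succ ha.natDegree_pos (n + 1)
  rw [lnorm_emb (den_ne_zero hb.natDegree_pos _), h.fnorm_den_mul_left ha hb.natDegree_pos,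
    hb.fnorm_den_mul, ← div_eq_mul_inv, ← mul_div_assoc, div_div, ← pow_mul, ← pow_add, ← pow_add,
    div_le_iff₀ (by positivity), ← pow_add]
  exact pow_le_pow_right₀ one_le_two (by omega)

lemma eq_zero_of_forall_exists_isMirrorBlock (ha : IsExpansion a F) (hb : IsExpansion b G)
    (hG : ¬ IsRat G) (h : ∀ N, ∃ s n, N ≤ s ∧ IsMirrorBlock a b s n) {A B C : k[X]}
    (hrel : emb A * F + emb B * G + emb C = 0) : A = 0 ∧ B = 0 ∧ C = 0 := by
  refine eq_zero_of_forall_exists_fnorm_lt hG (fun c => ?_) hrel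
  obtain ⟨N, hN⟩ := pow_unbounded_of_one_lt c one_lt_two
  obtain ⟨s, n, hs, hblock⟩ := h N
  have hc : c ≤ 2 ^ s := hN.le.trans (pow_le_pow_right₀ one_le_two hs)
  exact ⟨den b (s + 2 + n),
    (mul_le_mul_of_nonneg_right hc (fnorm_nonneg _)).trans_lt
      (hblock.pow_mul_fnorm_left_lt_one ha hb.natDegree_pos),
    (mul_le_mul_of_nonneg_right hc (fnorm_nonneg _)).trans_lt
      (hblock.pow_mul_fnorm_right_lt ha hb)⟩

end MirrorBlock

section Mirror

variable {a t : ℕ → k[X]} {m : ℕ → ℕ} {M : ℕ}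

/-- The index `j` of the block `m j < x ≤ m (j + 1)` containing `x`. -/
def blockIndex (m : ℕ → ℕ) (x : ℕ) : ℕ := sInf {j | x ≤ m (j + 1)}

lemma blockIndex_eq (hm : StrictMono m) {j x : ℕ} (hlt : m j < x) (hle : x ≤ m (j + 1)) :
    blockIndex m x = j := by
  refine le_antisymm (Nat.sInf_le hle) ?_
  have hmem : x ≤ m (blockIndex m x + 1) := Nat.sInf_mem (s := {j | x ≤ m (j + 1)}) ⟨j, hle⟩
  exact Nat.lt_succ_iff.1 (hm.lt_iff_lt.1 (hlt.trans_le hmem))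

/-- The sequence which on each block `m j < x ≤ m (j + 1)` reads `t j, a n, …, a 1`, where
`n + 1 = m (j + 1) - m j`: the partial quotients of the series `Φ_t` of the paper, except that here
each block starts with its separator instead of ending with it. The term at `0` is arbitrary. -/
def mirror (a : ℕ → k[X]) (m : ℕ → ℕ) (t : ℕ → k[X]) (x : ℕ) : k[X] :=
  if x = m (blockIndex m x) + 1 then t (blockIndex m x)
  else a (m (blockIndex m x + 1) + 1 - x)

lemma mirror_separator (hm : StrictMono m) (j : ℕ) : mirror a m t (m j + 1) = t j := by
  rw [mirror, blockIndex_eq hm (Nat.lt_succ_self _) (hm j.lt_succ_self), if_pos rfl]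

lemma mirror_of_lt_of_le (hm : StrictMono m) {j x : ℕ} (hlt : m j + 1 < x) (hle : x ≤ m (j + 1)) :
    mirror a m t x = a (m (j + 1) + 1 - x) := by
  rw [mirror, blockIndex_eq hm (by omega) hle, if_neg (by omega)]

lemma mirror_injective (hm : StrictMono m) : Function.Injective (mirror a m) := by
  intro t t' h
  ext1 j
  rw [← mirror_separator (a := a) (t := t) hm, h, mirror_separator hm]

lemma mirror_succ_eq_or (hm : StrictMono m) (hm₀ : m 0 = 0) (a t : ℕ → k[X]) (x : ℕ) :
    (∃ j, mirror a m t (x + 1) = t j) ∨ ∃ n, mirror a m t (x + 1) = a (n + 1) := by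
  obtain ⟨j, hlt, hle⟩ : ∃ j, m j < x + 1 ∧ x + 1 ≤ m (j + 1) :=
    hm.exists_between_of_tendsto_atTop hm.tendsto_atTop (by omega)
  rcases (Nat.succ_le_of_lt hlt).eq_or_lt with heq | hlt
  · exact Or.inl ⟨j, by rw [← heq]; exact mirror_separator hm j⟩
  · exact Or.inr ⟨m (j + 1) - (x + 1), by rw [mirror_of_lt_of_le hm hlt hle, Nat.sub_add_comm hle]⟩

lemma isMirrorBlock_mirror (hm : StrictMono m) {j n : ℕ} (hmj : m (j + 1) = m j + 2 + n)
    (ht : ∀ i, (a (i + 1)).natDegree < (t j).natDegree)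
    (hlen : (den (mirror a m t) (m j + 1)).natDegree + m j ≤ n) :
    IsMirrorBlock a (mirror a m t) (m j) n where
  natDegree_lt i := by
    rw [mirror_separator hm]
    exact ht i
  eq_reverse i l hil := by
    rw [mirror_of_lt_of_le (j := j) hm (by omega) (by omega)]
    congr 1
    omega
  natDegree_den_add_le := hlen

/-- The separators encoding a set `S` of natural numbers: monomials of degree `M + 2` at the indices
in `S` and of degree `M + 1` at the others. -/
def separator (M : ℕ) (S : Set ℕ) (j : ℕ) : k[X] := X ^ (if j ∈ S then M + 2 else M + 1)

lemma natDegree_separator (M : ℕ) (S : Set ℕ) (j : ℕ) :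
    (separator M S j : k[X]).natDegree = if j ∈ S then M + 2 else M + 1 :=
  natDegree_X_pow _

lemma separator_injective (M : ℕ) : Function.Injective (separator M : Set ℕ → ℕ → k[X]) := by
  intro S T h
  ext j
  have hdeg := congrArg natDegree (congrFun h j)
  rw [natDegree_separator, natDegree_separator] at hdeg
  split_ifs at hdeg with hS hT hT <;> simp_all

lemma natDegree_mirror_separator (hm : StrictMono m) (hm₀ : m 0 = 0)
    (ha : ∀ n, 0 < (a (n + 1)).natDegree) (haM : ∀ n, (a (n + 1)).natDegree ≤ M)
    (S : Set ℕ) (x : ℕ) : 0 < (mirror a m (separator M S) (x + 1)).natDegree ∧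
      (mirror a m (separator M S) (x + 1)).natDegree ≤ M + 2 := by
  rcases mirror_succ_eq_or hm hm₀ a (separator M S) x with ⟨j, h⟩ | ⟨n, h⟩
  · rw [h, natDegree_separator]
    split_ifs <;> omega
  · rw [h]
    exact ⟨ha n, (haM n).trans (by omega)⟩

lemma exists_strictMono_of_forall_exists {P : ℕ → ℕ → Prop} (h : ∀ s, ∃ n, P s n) :
    ∃ m : ℕ → ℕ, m 0 = 0 ∧ StrictMono m ∧ ∀ j, ∃ n, m (j + 1) = m j + 2 + n ∧ P (m j) n := by
  choose g hg using h
  have hsucc (j : ℕ) := Function.iterate_succ_apply' (fun s => s + 2 + g s) j 0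
  exact ⟨fun j => (fun s => s + 2 + g s)^[j] 0, rfl,
    strictMono_nat_of_lt_succ fun j => by rw [hsucc]; omega, fun j => ⟨_, hsucc j, hg _⟩⟩

lemma exists_blocks {ψ : ℕ → ℝ} (hψ : Tendsto ψ atTop atTop) (D : ℕ) :
    ∃ m : ℕ → ℕ, m 0 = 0 ∧ StrictMono m ∧ ∀ j, ∃ n, m (j + 1) = m j + 2 + n ∧
      D * (m j + 1) + m j ≤ n ∧ ∀ d ≥ n, 2 ^ (2 * (D * (m j + 1))) ≤ ψ d := by
  refine exists_strictMono_of_forall_exists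
    (P := fun s n => D * (s + 1) + s ≤ n ∧ ∀ d ≥ n, 2 ^ (2 * (D * (s + 1))) ≤ ψ d) fun s => ?_
  obtain ⟨n, hn⟩ := eventually_atTop.1 (hψ.eventually_ge_atTop (2 ^ (2 * (D * (s + 1)))))
  exact ⟨max n (D * (s + 1) + s), le_max_right _ _,
    fun d hd => hn d ((le_max_left _ _).trans hd)⟩

lemma exists_isMirrorBlock {ψ : ℕ → ℝ} (hψ : Tendsto ψ atTop atTop)
    (ha : ∀ n, 0 < (a (n + 1)).natDegree) (haM : ∀ n, (a (n + 1)).natDegree ≤ M) :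
    ∃ m : ℕ → ℕ, m 0 = 0 ∧ StrictMono m ∧ ∀ (S : Set ℕ) (N : ℕ), ∃ s n, N ≤ s ∧
      IsMirrorBlock a (mirror a m (separator M S)) s n ∧
      ∀ d ≥ n, 2 ^ (2 * (den (mirror a m (separator M S)) (s + 1)).natDegree) ≤ ψ d := by
  obtain ⟨m, hm₀, hm, hblock⟩ := exists_blocks hψ (M + 2)
  refine ⟨m, hm₀, hm, fun S N => ?_⟩
  obtain ⟨n, hmN, hlen, hψn⟩ := hblock N
  have hb := natDegree_mirror_separator hm hm₀ ha haM S
  have hden := natDegree_den_le (fun x => (hb x).1) (fun x => (hb x).2) (m N + 1)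
  refine ⟨m N, n, hm.le_apply, isMirrorBlock_mirror hm hmN (fun i => ?_) (by omega), fun d hd => ?_⟩
  · rw [natDegree_separator]
    have := haM i
    split_ifs <;> omega
  · exact (pow_le_pow_right₀ one_le_two (by omega)).trans (hψn d hd)

lemma not_countable_range_of_injective {α : Type*} {f : Set ℕ → α} (hf : Function.Injective f) :
    ¬ (Set.range f).Countable := fun h => by
  obtain ⟨g, hg⟩ := h.to_subtype.exists_injective_nat
  exact Function.cantor_injective _ (hg.comp (Set.rangeFactorization_injective.2 hf))

end Mirror

lemma tendsto_one_div_two_pow_atTop {φ : ℕ → ℝ} (hφpos : ∀ d, 1 ≤ d → 0 < φ d)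
    (hφlim : Tendsto φ atTop (nhds 0)) : Tendsto (fun d => 1 / φ (2 ^ d)) atTop atTop := by
  have hpow : Tendsto (fun d => φ (2 ^ d)) atTop (nhds 0) :=
    hφlim.comp (tendsto_pow_atTop_atTop_of_one_lt one_lt_two)
  simp only [one_div]
  exact (tendsto_nhdsWithin_iff.2
    ⟨hpow, .of_forall fun d => hφpos _ Nat.one_le_two_pow⟩).inv_tendsto_nhdsGT_zero

theorem theorem1_general {ψ : ℕ → ℝ} (hψ : Tendsto ψ atTop atTop) {Θ : LaurentSeries k}
    (hΘ : Bad Θ) :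
    ∃ B : Set (LaurentSeries k), ¬ B.Countable ∧ ∀ Φ ∈ B, Bad Φ ∧
      (∀ A B' C : k[X], emb A * Θ + emb B' * Φ + emb C = 0 → A = 0 ∧ B' = 0 ∧ C = 0) ∧
      ∀ N : ℕ, ∃ q : k[X], q ≠ 0 ∧ N ≤ q.natDegree ∧
        lnorm (emb q) ^ 2 * fnorm (emb q * Θ) * fnorm (emb q * Φ) ≤ ψ q.natDegree := by
  have ha := isExpansion_pq hΘ.not_isRat
  obtain ⟨M, haM⟩ := hΘ.exists_natDegree_le ha
  obtain ⟨m, hm₀, hm, hblock⟩ := exists_isMirrorBlock hψ ha.natDegree_pos haM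
  have hb := natDegree_mirror_separator hm hm₀ ha.natDegree_pos haM
  choose Φ hΦ using fun S => exists_isExpansion fun x => (hb S x).1
  have hinj : Function.Injective Φ := fun S T h =>
    separator_injective M (mirror_injective hm ((hΦ S).unique (h ▸ hΦ T)))
  refine ⟨Set.range Φ, not_countable_range_of_injective hinj, ?_⟩
  rintro _ ⟨S, rfl⟩
  have hbad : Bad (Φ S) := (hΦ S).bad fun x => (hb S x).2
  refine ⟨hbad, fun A B C => eq_zero_of_forall_exists_isMirrorBlock ha (hΦ S) hbad.not_isRat
    fun N => ?_, fun N => ?_⟩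
  · obtain ⟨s, n, hs, h, -⟩ := hblock S N
    exact ⟨s, n, hs, h⟩
  · obtain ⟨s, n, hs, h, hψn⟩ := hblock S N
    have hq := le_natDegree_den (hΦ S).natDegree_pos (s + 2 + n)
    exact ⟨_, den_ne_zero (hΦ S).natDegree_pos _, by omega,
      (h.lnorm_sq_mul_fnorm_mul_fnorm_le ha (hΦ S)).trans (hψn _ (by omega))⟩

theorem theorem1 {k : Type*} [Field k] (φ : ℕ → ℝ)
    (hφpos : ∀ d : ℕ, 1 ≤ d → 0 < φ d)
    (hφmono : ∀ d e : ℕ, 1 ≤ d → d ≤ e → φ e ≤ φ d)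
    (hφ1 : φ 1 = 1) (hφlim : Tendsto φ atTop (nhds 0))
    (Θ : LaurentSeries k) (hΘ : Bad Θ) :
    ∃ B : Set (LaurentSeries k), ¬ B.Countable ∧ ∀ Φ ∈ B, Bad Φ ∧
      (∀ A B' C : Polynomial k, emb A * Θ + emb B' * Φ + emb C = 0 →
        A = 0 ∧ B' = 0 ∧ C = 0) ∧
      ∀ N : ℕ, ∃ q : Polynomial k, q ≠ 0 ∧ N ≤ q.natDegree ∧
        lnorm (emb q) ^ 2 * fnorm (emb q * Θ) * fnorm (emb q * Φ) ≤
          1 / φ (2 ^ q.natDegree) :=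
  theorem1_general (tendsto_one_div_two_pow_atTop hφpos hφlim) hΘ

end Littlewood
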